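/- Let V = H²₀(Ω) with norm ‖v‖ = ‖D²v‖_{L²(Ω)}, and G(v) := Γ(v,v) ∈ V* with Γ(v,w,φ) = ∫_Ω Δv (curl w · ∇φ) dx. Then the Fréchet derivative DG(v) = Γ(v,·) + Γ(·,v) satisfies the Lipschitz estimate ‖DG(v) − DG(w)‖_{L(V;V*)} ≤ (2|Ω|^{1/2}/π²) ‖v − w‖ for all v, w ∈ V. -/

import Mathlib

open MeasureTheory

noncomputable section

/-- Partial derivative `∂f/∂xᵢ`. -/
def pd (f : EuclideanSpace ℝ (Fin 2) → ℝ) (i : Fin 2) (x : EuclideanSpace ℝ (Fin 2)) : ℝ :=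
  fderiv ℝ f x (EuclideanSpace.single i 1)

/-- Second partial derivative `∂²f/∂xᵢ∂xⱼ`. -/
def pd2 (f : EuclideanSpace ℝ (Fin 2) → ℝ) (i j : Fin 2) (x : EuclideanSpace ℝ (Fin 2)) : ℝ :=
  fderiv ℝ (fun y => pd f j y) x (EuclideanSpace.single i 1)

/-- Laplacian `Δf`. -/
def lap (f : EuclideanSpace ℝ (Fin 2) → ℝ) (x : EuclideanSpace ℝ (Fin 2)) : ℝ :=
  pd2 f 0 0 x + pd2 f 1 1 x

/-- `|D²f(x)|²` (squared Frobenius norm of the Hessian). -/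
def hess2 (f : EuclideanSpace ℝ (Fin 2) → ℝ) (x : EuclideanSpace ℝ (Fin 2)) : ℝ :=
  ∑ i, ∑ j, (pd2 f i j x) ^ 2

/-- Trilinear form `Γ(v,w,φ) = ∫_Ω Δv (curl w · ∇φ)` with
`curl w = (∂w/∂y, −∂w/∂x)`, so `curl w · ∇φ = ∂w/∂y ∂φ/∂x − ∂w/∂x ∂φ/∂y`. -/
def Gam (Ω : Set (EuclideanSpace ℝ (Fin 2))) (v w φ : EuclideanSpace ℝ (Fin 2) → ℝ) : ℝ :=
  ∫ x in Ω, lap v x * (pd w 1 x * pd φ 0 x - pd w 0 x * pd φ 1 x)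

/-- A smooth function compactly supported in `Ω`, a proxy for membership in `H²₀(Ω)`. -/
def IsTest (Ω : Set (EuclideanSpace ℝ (Fin 2))) (φ : EuclideanSpace ℝ (Fin 2) → ℝ) : Prop :=
  ContDiff ℝ (⊤ : ℕ∞) φ ∧ HasCompactSupport φ ∧ tsupport φ ⊆ Ω

lemma transport (G ρ : ℝ → ℝ) (hG : Continuous G) (hGp : ∀ x, 0 < G x) (hρ : Continuous ρ)
    (hρ0 : ∀ x, 0 ≤ ρ x) (R L : ℝ) (hR : 0 < R) (hL : 0 < L)
    (hm : 0 < ∫ x in -L..L, ρ x) :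
    ∃ T : ℝ → ℝ, Continuous T ∧
      (∀ x ∈ Set.Icc (-L) L, HasDerivAt T
        ((∫ a in -R..R, G a) / (∫ x in -L..L, ρ x) * ρ x / G (T x)) x) ∧
      (∀ k : ℝ → ℝ, Continuous k → ∫ x in -L..L, ρ x * k (T x) =
        (∫ x in -L..L, ρ x) / (∫ a in -R..R, G a) * ∫ a in -R..R, G a * k a) := by
  set m := ∫ x in -L..L, ρ x with hmdef
  set I := ∫ a in -R..R, G a with hI
  have hRR : -R ≤ R := by linarith
  have hLL : -L ≤ L := by linarith
  have hIpos : 0 < I :=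
    intervalIntegral.intervalIntegral_pos_of_pos (hG.intervalIntegrable _ _) hGp (by linarith)
  -- constant extension
  let Gt : ℝ → ℝ := fun a => G (max (-R) (min R a))
  have hGt : Continuous Gt := by fun_prop
  have hGteq : ∀ a ∈ Set.Icc (-R) R, Gt a = G a := by
    intro a ha
    simp only [Gt]
    rw [min_eq_right ha.2, max_eq_right ha.1]
  have hGtpos : ∀ a, 0 < Gt a := fun a => hGp _
  obtain ⟨g0, hg0, hg0le⟩ : ∃ g0 : ℝ, 0 < g0 ∧ ∀ a, g0 ≤ Gt a := by
    obtain ⟨z, hz, hz2⟩ := (isCompact_Icc (a := -R) (b := R)).exists_isMinOn ⟨R, by simp [hRR]⟩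
      hG.continuousOn
    refine ⟨G z, hGp z, fun a => hz2 ?_⟩
    exact ⟨le_max_left _ _, max_le hRR (min_le_left _ _)⟩
  let C : ℝ → ℝ := fun a => ∫ t in -R..a, Gt t
  have hCd : ∀ a, HasDerivAt C (Gt a) a := fun a =>
    intervalIntegral.integral_hasDerivAt_right (hGt.intervalIntegrable _ _)
      hGt.stronglyMeasurable.stronglyMeasurableAtFilter hGt.continuousAt
  have hCcont : Continuous C := continuous_iff_continuousAt.2 fun a => (hCd a).continuousAt
  have hCmono : StrictMono C := strictMono_of_deriv_pos fun a => by
    rw [(hCd a).deriv]; exact hGtpos a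
  have hCdiff : ∀ a b, a ≤ b → g0 * (b - a) ≤ C b - C a := by
    intro a b hab
    have : C b - C a = ∫ t in a..b, Gt t := by
      simp only [C]
      rw [intervalIntegral.integral_interval_sub_left (hGt.intervalIntegrable _ _)
        (hGt.intervalIntegrable _ _)]
    rw [this]
    have h2 : ∫ t in a..b, g0 ≤ ∫ t in a..b, Gt t :=
      intervalIntegral.integral_mono_on hab (by simp) (hGt.intervalIntegrable _ _)
        (fun x _ => hg0le x)
    rw [intervalIntegral.integral_const, smul_eq_mul] at h2
    linarith
  have hC0 : C (-R) = 0 := by simp [C]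
  have hCsurj : Function.Surjective C := by
    apply hCcont.surjective
    · refine Filter.tendsto_atTop_mono' _ (f₁ := fun b => g0 * (b + R)) ?_ ?_
      · filter_upwards [Filter.eventually_ge_atTop (-R)] with b hb
        have := hCdiff (-R) b hb
        rw [hC0] at this; linarith
      · exact Filter.Tendsto.const_mul_atTop hg0
          (Filter.tendsto_atTop_add_const_right _ _ Filter.tendsto_id)
    · refine Filter.tendsto_atBot_mono' _ (f₁ := fun b => g0 * (b + R)) ?_ ?_
      · filter_upwards [Filter.eventually_le_atBot (-R)] with b hb
        have := hCdiff b (-R) hb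
        rw [hC0] at this; linarith
      · exact Filter.Tendsto.const_mul_atBot hg0
          (Filter.tendsto_atBot_add_const_right _ _ Filter.tendsto_id)
  have hCR : C R = I := by
    simp only [C, hI]
    apply intervalIntegral.integral_congr
    intro a ha
    rw [Set.uIcc_of_le hRR] at ha
    exact hGteq a ha
  let e : ℝ ≃o ℝ := StrictMono.orderIsoOfSurjective C hCmono hCsurj
  have he : ∀ y, C (e.symm y) = y := fun y => e.apply_symm_apply y
  have hes : ∀ y, HasDerivAt e.symm (Gt (e.symm y))⁻¹ y := fun y =>
    HasDerivAt.of_local_left_inverse (f := C) e.symm.continuous.continuousAt (hCd _)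
      (hGtpos _).ne' (Filter.Eventually.of_forall he)
  let M : ℝ → ℝ := fun x => ∫ t in -L..x, ρ t
  have hMd : ∀ a, HasDerivAt M (ρ a) a := fun a =>
    intervalIntegral.integral_hasDerivAt_right (hρ.intervalIntegrable _ _)
      hρ.stronglyMeasurable.stronglyMeasurableAtFilter hρ.continuousAt
  have hMmono : Monotone M := monotone_of_deriv_nonneg (fun a => (hMd a).differentiableAt)
    fun a => by rw [(hMd a).deriv]; exact hρ0 a
  have hM0 : M (-L) = 0 := by simp [M]
  have hM1 : M L = m := rfl
  let T : ℝ → ℝ := fun x => e.symm (I / m * M x)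
  have hTd' : ∀ x, HasDerivAt T ((Gt (T x))⁻¹ * (I / m * ρ x)) x := fun x =>
    (hes _).comp x ((hMd x).const_mul (I / m))
  have hTcont : Continuous T := continuous_iff_continuousAt.2 fun a => (hTd' a).continuousAt
  have heR : e.symm I = R := by rw [← hCR]; exact e.symm_apply_apply R
  have heR' : e.symm 0 = -R := by rw [← hC0]; exact e.symm_apply_apply (-R)
  have hTL : T L = R := by
    simp only [T]; rw [hM1, div_mul_cancel₀ _ hm.ne', heR]
  have hTL' : T (-L) = -R := by
    simp only [T]; rw [hM0, mul_zero, heR']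
  have hTmono : Monotone T := fun x y hxy => e.symm.monotone
    (mul_le_mul_of_nonneg_left (hMmono hxy) (by positivity))
  have hTmem : ∀ x ∈ Set.Icc (-L) L, T x ∈ Set.Icc (-R) R := fun x hx =>
    ⟨hTL' ▸ hTmono hx.1, hTL ▸ hTmono hx.2⟩
  have hTd : ∀ x ∈ Set.Icc (-L) L, HasDerivAt T (I / m * ρ x / G (T x)) x := by
    intro x hx
    have := hTd' x
    rw [hGteq _ (hTmem x hx)] at this
    convert this using 1
    rw [div_eq_mul_inv, mul_comm]
  refine ⟨T, hTcont, hTd, fun k hk => ?_⟩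
  have hcomp := intervalIntegral.integral_comp_mul_deriv (a := -L) (b := L) (f := T)
    (f' := fun x => (Gt (T x))⁻¹ * (I / m * ρ x)) (g := fun a => Gt a * k a)
    (fun x _ => hTd' x)
    (by
      apply Continuous.continuousOn
      exact ((hGt.comp hTcont).inv₀ fun x => (hGtpos _).ne').mul (continuous_const.mul hρ))
    (hGt.mul hk)
  rw [hTL, hTL'] at hcomp
  have e1 : ∫ a in -R..R, G a * k a = ∫ a in -R..R, Gt a * k a := by
    apply intervalIntegral.integral_congr
    intro a ha
    rw [Set.uIcc_of_le hRR] at ha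
    simp only [hGteq a ha]
  rw [e1, ← hcomp, ← intervalIntegral.integral_const_mul]
  apply intervalIntegral.integral_congr
  intro x _
  have := (hGtpos (T x)).ne'
  simp only [Function.comp]
  field_simp

lemma young_pt {S Sx Sy H χ a T α β : ℝ} (hS : 0 ≤ S) (hH : 0 ≤ H) (hχ : 0 ≤ χ)
    (hb : Sx ^ 2 + Sy ^ 2 ≤ 4 * H * S) (hSχ : S ≠ 0 → 1 ≤ χ) (hα : 0 < α) (hβ : 0 < β) :
    -(Sy * T) ≤ a * Sx + α * H + 1 / α * (β / 2 * χ + 1 / (2 * β) * (S ^ 2 * (a ^ 2 + T ^ 2) ^ 2)) := by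
  set r := a ^ 2 + T ^ 2 with hr
  have hr0 : 0 ≤ r := by positivity
  have h1 : -(Sy * T + a * Sx) ≤ α * H + 1 / α * (S * r) := by
    have h0 : 0 ≤ α * H + 1 / α * (S * r) := by positivity
    apply le_trans (neg_le_abs _)
    apply abs_le_of_sq_le_sq _ h0
    have e1 : (Sy * T + a * Sx) ^ 2 ≤ (Sx ^ 2 + Sy ^ 2) * r := by
      rw [hr]; nlinarith [sq_nonneg (Sy * a - T * Sx)]
    have e2 : (Sx ^ 2 + Sy ^ 2) * r ≤ 4 * H * S * r := mul_le_mul_of_nonneg_right hb hr0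
    have e3 : (α * H + 1 / α * (S * r)) ^ 2 = (α * H - 1 / α * (S * r)) ^ 2 + 4 * H * S * r := by
      field_simp; ring
    nlinarith [sq_nonneg (α * H - 1 / α * (S * r))]
  have h2 : S * r ≤ β / 2 * χ + 1 / (2 * β) * (S ^ 2 * r ^ 2) := by
    by_cases h : S = 0
    · subst h; simp; positivity
    · have h3 := hSχ h
      have e4 : β / 2 + 1 / (2 * β) * (S ^ 2 * r ^ 2) - S * r = (β - S * r) ^ 2 / (2 * β) := by
        field_simp; ring
      have e5 : 0 ≤ (β - S * r) ^ 2 / (2 * β) := by positivity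
      nlinarith
  have h3 := mul_le_mul_of_nonneg_left h2 (show 0 ≤ 1 / α by positivity)
  linarith

lemma inner_step (g S Sx Sy H χ : ℝ → ℝ) (hg : Continuous g) (hgp : ∀ y, 0 < g y)
    (hS : Continuous S) (hSx : Continuous Sx) (hSy : Continuous Sy) (hH : Continuous H)
    (hχ : Continuous χ) (hS0 : ∀ y, 0 ≤ S y) (hH0 : ∀ y, 0 ≤ H y) (hχ0 : ∀ y, 0 ≤ χ y)
    (hd : ∀ y, HasDerivAt S (Sy y) y) (R L : ℝ) (hR : 0 < R) (hL : 0 < L)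
    (hSL : S L = 0) (hSL' : S (-L) = 0)
    (hb : ∀ y, Sx y ^ 2 + Sy y ^ 2 ≤ 4 * H y * S y) (hSχ : ∀ y, S y ≠ 0 → 1 ≤ χ y)
    (a c α β : ℝ) (hc : 0 < c) (hα : 0 < α) (hβ : 0 < β) :
    2 * c * ((∫ y in -L..L, S y ^ 2) / (∫ y in -R..R, g y ^ 2) * ∫ y in -R..R, g y) ≤
      (c ^ 2 * (∫ y in -L..L, S y ^ 2) / (∫ y in -R..R, g y ^ 2)) * (∫ y in -L..L, S y) +
      a * (∫ y in -L..L, Sx y) + α * (∫ y in -L..L, H y) +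
      1 / α * (β / 2 * (∫ y in -L..L, χ y) + 1 / (2 * β) *
        ((∫ y in -L..L, S y ^ 2) / (∫ y in -R..R, g y ^ 2) *
          ∫ y in -R..R, g y ^ 2 * (a ^ 2 + y ^ 2) ^ 2)) := by
  have hLL : -L ≤ L := by linarith
  have hm0 : 0 ≤ ∫ y in -L..L, S y ^ 2 :=
    intervalIntegral.integral_nonneg hLL fun y _ => by positivity
  have iH : 0 ≤ ∫ y in -L..L, H y := intervalIntegral.integral_nonneg hLL fun y _ => hH0 y
  have iχ : 0 ≤ ∫ y in -L..L, χ y := intervalIntegral.integral_nonneg hLL fun y _ => hχ0 y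
  have hG1 : 0 < ∫ y in -R..R, g y ^ 2 :=
    intervalIntegral.intervalIntegral_pos_of_pos ((hg.pow 2).intervalIntegrable _ _)
      (fun y => pow_pos (hgp y) 2) (by linarith)
  rcases hm0.eq_or_lt with hm | hm
  · rw [← hm]
    have hz : ∀ y ∈ Set.Icc (-L) L, S y = 0 := by
      by_contra! hne
      obtain ⟨y, hy, hy2⟩ := hne
      have := intervalIntegral.integral_pos (a := -L) (b := L) (f := fun y => S y ^ 2) (by linarith)
        (hS.pow 2).continuousOn (fun y _ => by positivity) ⟨y, hy, by positivity⟩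
      linarith
    have hx : ∫ y in -L..L, Sx y = 0 := by
      rw [intervalIntegral.integral_congr (g := fun _ => (0 : ℝ))]
      · simp
      intro y hy
      rw [Set.uIcc_of_le hLL] at hy
      have h1 := hb y
      rw [hz y hy] at h1
      have : Sx y ^ 2 ≤ 0 := by nlinarith [sq_nonneg (Sy y)]
      simpa using le_antisymm this (sq_nonneg _)
    rw [hx]
    simp
    positivity
  set m := ∫ y in -L..L, S y ^ 2 with hmdef
  set G1 := ∫ y in -R..R, g y ^ 2 with hG1def
  obtain ⟨T, hT, hTd, hTk⟩ := transport (fun y => g y ^ 2) (fun y => S y ^ 2) (hg.pow 2)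
    (fun y => pow_pos (hgp y) 2) (hS.pow 2) (fun y => sq_nonneg _) R L hR hL hm
  rw [← hmdef, ← hG1def] at hTk
  simp only [← hmdef, ← hG1def] at hTd
  have hgT : Continuous fun y => g (T y) := hg.comp hT
  have hgT0 : ∀ y, g (T y) ^ 2 ≠ 0 := fun y => (pow_pos (hgp _) 2).ne'
  set q : ℝ → ℝ := fun y => G1 / m * S y ^ 2 / g (T y) ^ 2 with hq
  have hqc : Continuous q := by
    exact (continuous_const.mul (hS.pow 2)).div (hgT.pow 2) hgT0
  -- integration by parts
  have ibp : ∫ y in -L..L, S y * q y = - ∫ y in -L..L, Sy y * T y := by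
    rw [intervalIntegral.integral_mul_deriv_eq_deriv_mul (u := S) (v := T) (u' := Sy) (v' := q)
      (fun y _ => hd y) (fun y hy => hTd y (by rwa [Set.uIcc_of_le hLL] at hy))
      (hSy.intervalIntegrable _ _) (hqc.intervalIntegrable _ _), hSL, hSL']
    ring
  have k1 := hTk (fun t => (g t)⁻¹) (hg.inv₀ fun t => (hgp t).ne')
  have k2 := hTk (fun t => (a ^ 2 + t ^ 2) ^ 2) (by fun_prop)
  have k1' : ∫ t in -R..R, g t ^ 2 * (g t)⁻¹ = ∫ t in -R..R, g t := by
    apply intervalIntegral.integral_congr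
    intro t _
    have := (hgp t).ne'
    simp only
    field_simp
  rw [k1'] at k1
  rw [← k1, ← k2]
  have hgi : Continuous fun y => (g (T y))⁻¹ := hgT.inv₀ fun y => (hgp _).ne'
  set p := c ^ 2 * m / G1 with hp
  have hp0 : 0 < p := by positivity
  -- first inequality
  have i1 : 2 * c * ∫ y in -L..L, S y ^ 2 * (g (T y))⁻¹ ≤
      p * (∫ y in -L..L, S y) + ∫ y in -L..L, S y * q y := by
    rw [← intervalIntegral.integral_const_mul, ← intervalIntegral.integral_const_mul,
      ← intervalIntegral.integral_add (Continuous.intervalIntegrable (by fun_prop) _ _)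
        (Continuous.intervalIntegrable (by fun_prop) _ _)]
    apply intervalIntegral.integral_mono_on hLL (Continuous.intervalIntegrable (by fun_prop) _ _)
      (Continuous.intervalIntegrable (by fun_prop) _ _)
    intro y _
    have hgy := hgp (T y)
    have hq0 : 0 ≤ q y := by simp only [hq]; positivity
    have hpq : p * q y = (c * S y * (g (T y))⁻¹) ^ 2 := by
      simp only [hq, hp]
      field_simp
    have : 2 * (c * S y * (g (T y))⁻¹) ≤ p + q y := by
      apply le_of_sq_le_sq _ (by positivity)
      nlinarith [sq_nonneg (p - q y)]
    have := mul_le_mul_of_nonneg_left this (hS0 y)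
    nlinarith
  have i2 : - ∫ y in -L..L, Sy y * T y ≤ ∫ y in -L..L, (a * Sx y + α * H y +
      1 / α * (β / 2 * χ y + 1 / (2 * β) * (S y ^ 2 * (a ^ 2 + T y ^ 2) ^ 2))) := by
    rw [← intervalIntegral.integral_neg]
    apply intervalIntegral.integral_mono_on hLL (Continuous.intervalIntegrable (by fun_prop) _ _)
      (Continuous.intervalIntegrable (by fun_prop) _ _)
    intro y _
    exact young_pt (hS0 y) (hH0 y) (hχ0 y) (hb y) (hSχ y) hα hβ
  have i3 : ∫ y in -L..L, (a * Sx y + α * H y +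
      1 / α * (β / 2 * χ y + 1 / (2 * β) * (S y ^ 2 * (a ^ 2 + T y ^ 2) ^ 2))) =
      a * (∫ y in -L..L, Sx y) + α * (∫ y in -L..L, H y) +
      1 / α * (β / 2 * (∫ y in -L..L, χ y) + 1 / (2 * β) *
        ∫ y in -L..L, (S y ^ 2 * (a ^ 2 + T y ^ 2) ^ 2)) := by
    simp only [← intervalIntegral.integral_const_mul]
    rw [← intervalIntegral.integral_add (Continuous.intervalIntegrable (by fun_prop) _ _)
        (Continuous.intervalIntegrable (by fun_prop) _ _), ← intervalIntegral.integral_add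
        (Continuous.intervalIntegrable (by fun_prop) _ _)
        (Continuous.intervalIntegrable (by fun_prop) _ _),
        ← intervalIntegral.integral_const_mul,
        ← intervalIntegral.integral_add (Continuous.intervalIntegrable (by fun_prop) _ _)
        (Continuous.intervalIntegrable (by fun_prop) _ _)]
  rw [ibp] at i1
  linarith

def gg (x y : ℝ) : ℝ := (1 + (x ^ 2 + y ^ 2) ^ 2)⁻¹

lemma gg_pos (x y : ℝ) : 0 < gg x y := by unfold gg; positivity

lemma gg_cont : Continuous (Function.uncurry gg) := by
  unfold gg Function.uncurry
  exact Continuous.inv₀ (by fun_prop) fun p => by positivity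

def boxD (R : ℝ) : ℝ := ∫ x in -R..R, ∫ y in -R..R, gg x y

lemma par_cont (F : ℝ → ℝ → ℝ) (hF : Continuous (Function.uncurry F)) (a b : ℝ) :
    Continuous fun x => ∫ y in a..b, F x y :=
  intervalIntegral.continuous_parametric_intervalIntegral_of_continuous' hF a b

lemma final_alg {D N A E Z B c : ℝ} (hN : 0 < N) (hZ : 0 < Z) (hD : 0 < D)
    (hB : 0 < B) (hA : 0 ≤ A) (hE : 0 ≤ E) (hc : 0 < c) (hcz : c ^ 2 = Z / N) (hZB : Z + B = D)
    (h : ∀ α β : ℝ, 0 < α → 0 < β → 2 * c * (N / Z * D) ≤ α * E +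
      1 / α * (β / 2 * A + 1 / (2 * β) * (N / Z * B))) : 4 * D ^ 2 * N ≤ A * E ^ 2 := by
  set n := c * (N / Z) with hn
  have hn0 : 0 < n := by positivity
  have hn2 : n ^ 2 = N / Z := by
    rw [hn, mul_pow, hcz]; field_simp
  -- perturb A, E to be positive
  have key : ∀ A' E' : ℝ, 0 < A' → 0 < E' → A ≤ A' → E ≤ E' → 4 * D ^ 2 * N ≤ A' * E' ^ 2 := by
    intro A' E' hA' hE' hAA hEE
    set k := Real.sqrt (B / A') with hk
    have hk0 : 0 < k := Real.sqrt_pos.2 (by positivity)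
    have hk2 : k ^ 2 = B / A' := Real.sq_sqrt (by positivity)
    set j := Real.sqrt (n * k * A' / E') with hj
    have hj0 : 0 < j := Real.sqrt_pos.2 (by positivity)
    have hj2 : j ^ 2 = n * k * A' / E' := Real.sq_sqrt (by positivity)
    have h1 := h j (n * k) hj0 (by positivity)
    have h2 : n * k / 2 * A + 1 / (2 * (n * k)) * (N / Z * B) ≤ n * k * A' := by
      have e1 : B = k ^ 2 * A' := by rw [hk2]; field_simp
      rw [← hn2, e1]
      have e2 : 1 / (2 * (n * k)) * (n ^ 2 * (k ^ 2 * A')) = n * k / 2 * A' := by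
        field_simp
      rw [e2]
      have e12 : n * k / 2 * A ≤ n * k / 2 * A' := mul_le_mul_of_nonneg_left hAA (by positivity)
      linarith
    have h3 : j * E + 1 / j * (n * k / 2 * A + 1 / (2 * (n * k)) * (N / Z * B)) ≤
        2 * (j * E') := by
      have e3 : n * k * A' = j ^ 2 * E' := by rw [hj2]; field_simp
      have := mul_le_mul_of_nonneg_left h2 (show 0 ≤ 1 / j by positivity)
      rw [e3] at this
      have e4 : 1 / j * (j ^ 2 * E') = j * E' := by field_simp
      have e11 : j * E ≤ j * E' := mul_le_mul_of_nonneg_left hEE hj0.le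
      rw [e4] at this
      linarith
    have h4 : n * D ≤ j * E' := by
      have : 2 * c * (N / Z * D) = 2 * (n * D) := by rw [hn]; ring
      linarith
    have h5 : (n * D) ^ 2 ≤ n * k * A' * E' := by
      have : (n * D) ^ 2 ≤ (j * E') ^ 2 := pow_le_pow_left₀ (by positivity) h4 2
      have e5 : (j * E') ^ 2 = n * k * A' * E' := by
        rw [mul_pow, hj2]; field_simp
      linarith
    have h6 : n * D ^ 2 ≤ k * A' * E' := by
      have : n * (n * D ^ 2) ≤ n * (k * A' * E') := by
        have e1 : n * (n * D ^ 2) = (n * D) ^ 2 := by ring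
        have e2 : n * (k * A' * E') = n * k * A' * E' := by ring
        rw [e1, e2]; exact h5
      exact le_of_mul_le_mul_left this hn0
    have h7 : n ^ 2 * D ^ 4 ≤ B * A' * E' ^ 2 := by
      have : (n * D ^ 2) ^ 2 ≤ (k * A' * E') ^ 2 := pow_le_pow_left₀ (by positivity) h6 2
      have e6 : (k * A' * E') ^ 2 = B * A' * E' ^ 2 := by
        rw [mul_pow, mul_pow, hk2]; field_simp
      have e10 : (n * D ^ 2) ^ 2 = n ^ 2 * D ^ 4 := by ring
      rwa [e6, e10] at this
    rw [hn2] at h7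
    have h8 : N * D ^ 4 ≤ Z * B * (A' * E' ^ 2) := by
      have := mul_le_mul_of_nonneg_left h7 hZ.le
      have e7 : Z * (N / Z * D ^ 4) = N * D ^ 4 := by field_simp
      have e8 : Z * (B * A' * E' ^ 2) = Z * B * (A' * E' ^ 2) := by ring
      rwa [e7, e8] at this
    have h9 : 4 * (Z * B) ≤ D ^ 2 := by rw [← hZB]; nlinarith [sq_nonneg (Z - B)]
    have h10 : D ^ 2 * (4 * D ^ 2 * N) ≤ D ^ 2 * (A' * E' ^ 2) := by
      have : 4 * (Z * B) * (A' * E' ^ 2) ≤ D ^ 2 * (A' * E' ^ 2) :=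
        mul_le_mul_of_nonneg_right h9 (by positivity)
      have e9 : D ^ 2 * (4 * D ^ 2 * N) = 4 * (N * D ^ 4) := by ring
      rw [e9]
      linarith
    exact le_of_mul_le_mul_left h10 (by positivity)
  have hlim : Filter.Tendsto (fun ε : ℝ => (A + ε) * (E + ε) ^ 2) (nhdsWithin 0 (Set.Ioi 0))
      (nhds (A * E ^ 2)) := by
    have : Continuous fun ε : ℝ => (A + ε) * (E + ε) ^ 2 := by fun_prop
    have h2 := this.tendsto 0
    simp only [add_zero] at h2
    exact h2.mono_left nhdsWithin_le_nhds
  refine ge_of_tendsto hlim ?_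
  filter_upwards [self_mem_nhdsWithin] with ε hε
  have hε' : (0 : ℝ) < ε := hε
  exact key _ _ (by linarith) (by linarith) (by linarith) (by linarith)

lemma core (S Sx Sy H χ : ℝ → ℝ → ℝ)
    (hS : Continuous (Function.uncurry S)) (hSx : Continuous (Function.uncurry Sx))
    (hSy : Continuous (Function.uncurry Sy)) (hH : Continuous (Function.uncurry H))
    (hχ : Continuous (Function.uncurry χ)) (hS0 : ∀ x y, 0 ≤ S x y) (hH0 : ∀ x y, 0 ≤ H x y)
    (hχ0 : ∀ x y, 0 ≤ χ x y)
    (hdx : ∀ x y, HasDerivAt (fun t => S t y) (Sx x y) x)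
    (hdy : ∀ x y, HasDerivAt (fun t => S x t) (Sy x y) y)
    (R L : ℝ) (hR : 0 < R) (hL : 0 < L)
    (hSL1 : ∀ y, S L y = 0) (hSL2 : ∀ y, S (-L) y = 0)
    (hSL3 : ∀ x, S x L = 0) (hSL4 : ∀ x, S x (-L) = 0)
    (hb : ∀ x y, Sx x y ^ 2 + Sy x y ^ 2 ≤ 4 * H x y * S x y)
    (hSχ : ∀ x y, S x y ≠ 0 → 1 ≤ χ x y) :
    4 * boxD R ^ 2 * (∫ x in -L..L, ∫ y in -L..L, S x y ^ 2) ≤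
      (∫ x in -L..L, ∫ y in -L..L, χ x y) * (∫ x in -L..L, ∫ y in -L..L, H x y) ^ 2 := by
  have hLL : -L ≤ L := by linarith
  have hRR : -R ≤ R := by linarith
  have nn : ∀ F : ℝ → ℝ → ℝ, (∀ x y, 0 ≤ F x y) → 0 ≤ ∫ x in -L..L, ∫ y in -L..L, F x y :=
    fun F hF => intervalIntegral.integral_nonneg hLL fun x _ =>
      intervalIntegral.integral_nonneg hLL fun y _ => hF x y
  have hA := nn χ hχ0
  have hE := nn H hH0
  have hN0 := nn (fun x y => S x y ^ 2) (fun x y => sq_nonneg _)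
  rcases hN0.eq_or_lt with hN | hN
  · rw [← hN]; simp; positivity
  have hgg := gg_cont
  have cgg2 : Continuous (Function.uncurry fun x y => gg x y ^ 2) := hgg.pow 2
  have cS2 : Continuous (Function.uncurry fun x y => S x y ^ 2) := hS.pow 2
  have cB : Continuous (Function.uncurry fun x y => gg x y ^ 2 * (x ^ 2 + y ^ 2) ^ 2) :=
    cgg2.mul (by fun_prop)
  set G1 : ℝ → ℝ := fun x => ∫ y in -R..R, gg x y ^ 2 with hG1
  set D1 : ℝ → ℝ := fun x => ∫ y in -R..R, gg x y with hD1
  set B1 : ℝ → ℝ := fun x => ∫ y in -R..R, gg x y ^ 2 * (x ^ 2 + y ^ 2) ^ 2 with hB1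
  set m : ℝ → ℝ := fun x => ∫ y in -L..L, S x y ^ 2 with hm
  have cG1 : Continuous G1 := par_cont _ cgg2 _ _
  have cD1 : Continuous D1 := par_cont _ hgg _ _
  have cB1 : Continuous B1 := par_cont _ cB _ _
  have cm : Continuous m := par_cont _ cS2 _ _
  have sec : ∀ F : ℝ → ℝ → ℝ, Continuous (Function.uncurry F) → ∀ x, Continuous (F x) :=
    fun F hF x => hF.comp (by fun_prop : Continuous fun y : ℝ => (x, y))
  have sec' : ∀ F : ℝ → ℝ → ℝ, Continuous (Function.uncurry F) → ∀ y, Continuous fun x => F x y :=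
    fun F hF y => hF.comp (by fun_prop : Continuous fun x : ℝ => (x, y))
  have pG1 : ∀ x, 0 < G1 x := fun x =>
    intervalIntegral.intervalIntegral_pos_of_pos ((sec _ cgg2 x).intervalIntegrable _ _)
      (fun y => pow_pos (gg_pos x y) 2) (by linarith)
  have hDsum : ∀ x, G1 x + B1 x = D1 x := by
    intro x
    simp only [hG1, hB1, hD1]
    rw [← intervalIntegral.integral_add ((sec _ cgg2 x).intervalIntegrable _ _)
      ((sec _ cB x).intervalIntegrable _ _)]
    apply intervalIntegral.integral_congr
    intro y _
    simp only [gg]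
    have : (1 + (x ^ 2 + y ^ 2) ^ 2) ≠ 0 := by positivity
    field_simp
  set Z := ∫ x in -R..R, G1 x with hZ
  set B := ∫ x in -R..R, B1 x with hB
  have pZ : 0 < Z := intervalIntegral.intervalIntegral_pos_of_pos (cG1.intervalIntegrable _ _)
    pG1 (by linarith)
  have hB1nn : ∀ x, 0 ≤ B1 x := fun x => intervalIntegral.integral_nonneg hRR fun y _ => by positivity
  have pB : 0 < B := by
    refine intervalIntegral.integral_pos (by linarith) cB1.continuousOn (fun x _ => hB1nn x)
      ⟨R, ⟨hRR, le_rfl⟩, ?_⟩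
    refine intervalIntegral.integral_pos (by linarith) (sec _ cB R).continuousOn
      (fun y _ => by positivity) ⟨R, ⟨hRR, le_rfl⟩, ?_⟩
    have := gg_pos R R
    positivity
  have hZB : Z + B = boxD R := by
    rw [hZ, hB, ← intervalIntegral.integral_add (cG1.intervalIntegrable _ _)
      (cB1.intervalIntegrable _ _)]
    unfold boxD
    apply intervalIntegral.integral_congr
    intro x _
    exact hDsum x
  set N := ∫ x in -L..L, m x with hNdef
  have hNpos : 0 < N := hN
  obtain ⟨T, hT, hTd, hTk⟩ := transport G1 m cG1 pG1 cm
    (fun x => intervalIntegral.integral_nonneg hLL fun y _ => sq_nonneg _) R L hR hL hN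
  rw [← hNdef, ← hZ] at hTk
  simp only [← hNdef, ← hZ] at hTd
  set c := Real.sqrt (Z / N) with hc
  have hc0 : 0 < c := Real.sqrt_pos.2 (by positivity)
  have hc2 : c ^ 2 = Z / N := Real.sq_sqrt (by positivity)
  have pD : 0 < boxD R := by linarith
  refine final_alg hNpos pZ pD pB hA hE hc0 hc2 hZB fun α β hα hβ => ?_
  have cG1T : Continuous fun x => G1 (T x) := cG1.comp hT
  obtain ⟨q, hq⟩ : ∃ q : ℝ → ℝ, q = fun x => c ^ 2 * m x / G1 (T x) := ⟨_, rfl⟩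
  obtain ⟨QD, hQD⟩ : ∃ q : ℝ → ℝ, q = fun t => D1 t / G1 t := ⟨_, rfl⟩
  obtain ⟨QB, hQB⟩ : ∃ q : ℝ → ℝ, q = fun t => B1 t / G1 t := ⟨_, rfl⟩
  have cq : Continuous q := by
    rw [hq]; exact (continuous_const.mul cm).div cG1T fun x => (pG1 _).ne'
  have cQD : Continuous QD := by rw [hQD]; exact cD1.div cG1 fun t => (pG1 t).ne'
  have cQB : Continuous QB := by rw [hQB]; exact cB1.div cG1 fun t => (pG1 t).ne'
  have hin : ∀ x, 2 * c * (m x * QD (T x)) ≤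
      q x * (∫ y in -L..L, S x y) +
      T x * (∫ y in -L..L, Sx x y) + α * (∫ y in -L..L, H x y) +
      1 / α * (β / 2 * (∫ y in -L..L, χ x y) + 1 / (2 * β) * (m x * QB (T x))) := by
    intro x
    have := inner_step (gg (T x)) (S x) (Sx x) (Sy x) (H x) (χ x) (sec _ hgg _) (gg_pos _)
      (sec _ hS x) (sec _ hSx x) (sec _ hSy x) (sec _ hH x) (sec _ hχ x) (hS0 x) (hH0 x) (hχ0 x)
      (hdy x) R L hR hL (hSL3 x) (hSL4 x) (hb x) (hSχ x) (T x) c α β hc0 hα hβ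
    have e1 : m x * (D1 (T x) / G1 (T x)) = m x / G1 (T x) * D1 (T x) := by ring
    have e2 : m x * (B1 (T x) / G1 (T x)) = m x / G1 (T x) * B1 (T x) := by ring
    simp only [hq, hQD, hQB]
    rw [e1, e2]
    exact this
  have k1 := hTk QD cQD
  have k2 := hTk QB cQB
  have k1' : ∫ t in -R..R, G1 t * QD t = boxD R := by
    apply intervalIntegral.integral_congr
    intro t _
    have := (pG1 t).ne'
    simp only [hQD, hQB]
    field_simp
    rfl
  have k2' : ∫ t in -R..R, G1 t * QB t = B := by
    apply intervalIntegral.integral_congr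
    intro t _
    have := (pG1 t).ne'
    simp only [hQD, hQB]
    field_simp
  rw [k1'] at k1
  rw [k2'] at k2
  have cs : Continuous fun x => ∫ y in -L..L, S x y := par_cont _ hS _ _
  have csx : Continuous fun x => ∫ y in -L..L, Sx x y := par_cont _ hSx _ _
  have cH : Continuous fun x => ∫ y in -L..L, H x y := par_cont _ hH _ _
  have cχ : Continuous fun x => ∫ y in -L..L, χ x y := par_cont _ hχ _ _
  -- outer integration by parts
  have swap : ∀ F : ℝ → ℝ → ℝ, Continuous (Function.uncurry F) →
      ∫ x in -L..L, ∫ y in -L..L, F x y = ∫ y in -L..L, ∫ x in -L..L, F x y := by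
    intro F hF
    apply intervalIntegral_intervalIntegral_swap
    refine (hF.continuousOn.integrableOn_compact (K := Set.Icc (-L) L ×ˢ Set.Icc (-L) L)
      (isCompact_Icc.prod isCompact_Icc)).mono_set ?_
    rw [Set.uIoc_of_le hLL]
    exact Set.prod_mono Set.Ioc_subset_Icc_self Set.Ioc_subset_Icc_self
  have ibp : ∫ x in -L..L, q x * (∫ y in -L..L, S x y) =
      - ∫ x in -L..L, T x * (∫ y in -L..L, Sx x y) := by
    simp only [← intervalIntegral.integral_const_mul]
    have c1 : Continuous (Function.uncurry fun x y => q x * S x y) :=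
      (cq.comp continuous_fst).mul hS
    have c2 : Continuous (Function.uncurry fun x y => T x * Sx x y) :=
      (hT.comp continuous_fst).mul hSx
    rw [swap _ c1, swap _ c2, ← intervalIntegral.integral_neg]
    apply intervalIntegral.integral_congr
    intro y _
    simp only
    have := intervalIntegral.integral_mul_deriv_eq_deriv_mul (u := fun x => S x y) (v := T)
      (u' := fun x => Sx x y) (v' := q) (a := -L) (b := L)
      (fun x _ => hdx x y) (fun x hx => by
        have := hTd x (by rwa [Set.uIcc_of_le hLL] at hx)
        rw [← hc2] at this
        rw [hq]; exact this)
      ((sec' _ hSx y).intervalIntegrable _ _) (cq.intervalIntegrable _ _)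
    rw [hSL1, hSL2] at this
    simp only [mul_comm (q _), mul_comm (T _)]
    rw [this]; ring
  have big := intervalIntegral.integral_mono_on (μ := volume) hLL
    (Continuous.intervalIntegrable (by fun_prop) _ _)
    (Continuous.intervalIntegrable (by fun_prop) _ _) (fun x (_ : x ∈ Set.Icc (-L) L) => hin x)
  have ii : ∀ f : ℝ → ℝ, Continuous f → IntervalIntegrable f volume (-L) L :=
    fun f hf => hf.intervalIntegrable _ _
  rw [intervalIntegral.integral_const_mul, intervalIntegral.integral_add (ii _ (by fun_prop))
    (ii _ (by fun_prop)), intervalIntegral.integral_add (ii _ (by fun_prop))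
    (ii _ (by fun_prop)), intervalIntegral.integral_add (ii _ (by fun_prop))
    (ii _ (by fun_prop)), ibp, intervalIntegral.integral_const_mul,
    intervalIntegral.integral_const_mul, intervalIntegral.integral_add (ii _ (by fun_prop))
    (ii _ (by fun_prop)), intervalIntegral.integral_const_mul,
    intervalIntegral.integral_const_mul, k1, k2] at big
  linarith

lemma radial_1d : IntegrableOn (fun y : ℝ => y * (1 + y ^ 4)⁻¹) (Set.Ioi 0) ∧
    ∫ y in Set.Ioi (0:ℝ), y * (1 + y ^ 4)⁻¹ = Real.pi / 4 := by
  have hd : ∀ x ∈ Set.Ici (0:ℝ), HasDerivAt (fun y : ℝ => 1 / 2 * Real.arctan (y ^ 2))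
      (x * (1 + x ^ 4)⁻¹) x := by
    intro x _
    have := ((hasDerivAt_pow 2 x).arctan).const_mul (1 / 2 : ℝ)
    refine this.congr_deriv ?_
    rw [show (x ^ 2) ^ 2 = x ^ 4 by ring]
    norm_num
    ring
  have hp : ∀ x ∈ Set.Ioi (0:ℝ), 0 ≤ x * (1 + x ^ 4)⁻¹ := by
    intro x hx
    have : (0:ℝ) < x := hx
    positivity
  have ht : Filter.Tendsto (fun y : ℝ => 1 / 2 * Real.arctan (y ^ 2)) Filter.atTop
      (nhds (1 / 2 * (Real.pi / 2))) := by
    apply Filter.Tendsto.const_mul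
    exact (Real.tendsto_arctan_atTop.mono_right nhdsWithin_le_nhds).comp
      (Filter.tendsto_pow_atTop (by norm_num))
  refine ⟨integrableOn_Ioi_deriv_of_nonneg' hd hp ht, ?_⟩
  rw [integral_Ioi_of_hasDerivAt_of_nonneg' hd hp ht]
  simp
  ring

lemma gg_int : Integrable (Function.uncurry gg) ∧ ∫ p : ℝ × ℝ, gg p.1 p.2 = Real.pi ^ 2 / 2 := by
  have h1 : Integrable (fun z : ℂ => (1 + ‖z‖ ^ 4)⁻¹) := by
    rw [integrable_fun_norm_addHaar (μ := (volume : Measure ℂ)) (f := fun y : ℝ => (1 + y ^ 4)⁻¹)]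
    simpa using radial_1d.1
  have h2 : ∫ z : ℂ, (1 + ‖z‖ ^ 4)⁻¹ = Real.pi ^ 2 / 2 := by
    rw [integral_fun_norm_addHaar (μ := (volume : Measure ℂ)) (f := fun y : ℝ => (1 + y ^ 4)⁻¹)]
    simp [radial_1d.2, Measure.real]
    ring
  have he : ∀ z : ℂ, Function.uncurry gg (Complex.measurableEquivRealProd z) = (1 + ‖z‖ ^ 4)⁻¹ := by
    intro z
    simp only [Function.uncurry, gg, Complex.measurableEquivRealProd_apply]
    rw [show ‖z‖ ^ 4 = (‖z‖ ^ 2) ^ 2 by ring, Complex.sq_norm, Complex.normSq_apply]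
    ring
  have mp := Complex.volume_preserving_equiv_real_prod
  constructor
  · rw [← mp.integrable_comp_emb Complex.measurableEquivRealProd.measurableEmbedding]
    exact h1.congr (Filter.Eventually.of_forall fun z => (he z).symm)
  · have := mp.integral_comp Complex.measurableEquivRealProd.measurableEmbedding (Function.uncurry gg)
    rw [← h2]
    simp only [he] at this
    exact this.symm

lemma boxD_lim : Filter.Tendsto boxD Filter.atTop (nhds (Real.pi ^ 2 / 2)) := by
  rw [← gg_int.2]
  have h := (aecover_closedBall (μ := (volume : Measure (ℝ × ℝ))) (x := 0)
    (Filter.tendsto_id (α := ℝ) (x := Filter.atTop))).integral_tendsto_of_countably_generated gg_int.1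
  refine h.congr' ?_
  filter_upwards [Filter.eventually_gt_atTop (0:ℝ)] with R hR
  have hRR : -R ≤ R := by linarith
  have : Metric.closedBall (0 : ℝ × ℝ) (id R) = Set.Icc (-R) R ×ˢ Set.Icc (-R) R := by
    rw [show (0 : ℝ × ℝ) = ((0:ℝ), (0:ℝ)) from rfl, ← closedBall_prod_same, Real.closedBall_eq_Icc]
    simp
  rw [this, Measure.volume_eq_prod, setIntegral_prod]
  · unfold boxD
    rw [intervalIntegral.integral_of_le hRR, integral_Icc_eq_integral_Ioc]
    simp only [intervalIntegral.integral_of_le hRR, integral_Icc_eq_integral_Ioc]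
    rfl
  · exact gg_int.1.integrableOn

lemma IsTest.smooth {Ω w} (h : IsTest Ω w) : ContDiff ℝ (⊤ : ℕ∞) w := h.1

lemma pd_smooth {w : EuclideanSpace ℝ (Fin 2) → ℝ} (h : ContDiff ℝ (⊤ : ℕ∞) w) (i : Fin 2) :
    ContDiff ℝ (⊤ : ℕ∞) (pd w i) := by
  unfold pd
  exact (h.fderiv_right (m := (⊤ : ℕ∞)) (by norm_cast)).clm_apply contDiff_const

lemma pd2_eq (w : EuclideanSpace ℝ (Fin 2) → ℝ) (i j : Fin 2) : pd2 w i j = pd (pd w j) i := rfl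

lemma pd_off {w : EuclideanSpace ℝ (Fin 2) → ℝ} (i : Fin 2) {x} (hx : x ∉ tsupport w) :
    pd w i x = 0 := by
  unfold pd
  rw [image_eq_zero_of_notMem_tsupport (fun h => hx (tsupport_fderiv_subset ℝ h))]
  rfl

lemma tsupport_pd {w : EuclideanSpace ℝ (Fin 2) → ℝ} (i : Fin 2) :
    tsupport (pd w i) ⊆ tsupport w := by
  apply closure_minimal _ (isClosed_tsupport w)
  intro x hx
  by_contra h
  exact hx (pd_off i h)

lemma IsTest.pd {Ω w} (h : IsTest Ω w) (i) : IsTest Ω (pd w i) :=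
  ⟨pd_smooth h.1 i, h.2.1.mono' ((subset_tsupport _).trans (tsupport_pd i)),
    (tsupport_pd i).trans h.2.2⟩

lemma IsTest.cont {Ω w} (h : IsTest Ω w) : Continuous w := h.1.continuous

lemma IsTest.off {Ω w} (h : IsTest Ω w) {x} (hx : x ∉ Ω) : w x = 0 :=
  image_eq_zero_of_notMem_tsupport (fun h' => hx (h.2.2 h'))

lemma IsTest.add {Ω v w} (h : IsTest Ω v) (h' : IsTest Ω w) : IsTest Ω (fun x => v x + w x) :=
  ⟨h.1.add h'.1, h.2.1.add h'.2.1, (tsupport_add v w).trans (Set.union_subset h.2.2 h'.2.2)⟩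

lemma IsTest.sub {Ω v w} (h : IsTest Ω v) (h' : IsTest Ω w) : IsTest Ω (fun x => v x - w x) :=
  ⟨h.1.sub h'.1, h.2.1.sub h'.2.1, (tsupport_sub v w).trans (Set.union_subset h.2.2 h'.2.2)⟩

lemma IsTest.mul {Ω v w} (h : IsTest Ω v) (h' : IsTest Ω w) : IsTest Ω (fun x => v x * w x) :=
  ⟨h.1.mul h'.1, h.2.1.mul_right, (tsupport_mul_subset_left).trans h.2.2⟩

lemma IsTest.int {Ω w} (h : IsTest Ω w) : Integrable w := h.cont.integrable_of_hasCompactSupport h.2.1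

lemma IsTest.setint {Ω w} (h : IsTest Ω w) : ∫ x in Ω, w x = ∫ x, w x :=
  setIntegral_eq_integral_of_forall_compl_eq_zero fun _ hx => h.off hx

lemma IsTest.pd2 {Ω w} (h : IsTest Ω w) (i j) : IsTest Ω (pd2 w i j) := (h.pd j).pd i

lemma pd2_symm {w : EuclideanSpace ℝ (Fin 2) → ℝ} (h : ContDiff ℝ (⊤ : ℕ∞) w) (i j : Fin 2) (x) :
    pd2 w i j x = pd2 w j i x := by
  have hs : IsSymmSndFDerivAt ℝ w x := (h.contDiffAt).isSymmSndFDerivAt (by simp; exact WithTop.coe_le_coe.2 (le_top : (2 : ℕ∞) ≤ ⊤))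
  have hd : DifferentiableAt ℝ (fderiv ℝ w) x :=
    ((h.fderiv_right (m := (⊤ : ℕ∞)) (by norm_cast)).differentiable (by simp)) x
  have key : ∀ i j, pd2 w i j x
      = fderiv ℝ (fderiv ℝ w) x (EuclideanSpace.single i 1) (EuclideanSpace.single j 1) := by
    intro i j
    unfold _root_.pd2 _root_.pd
    rw [fderiv_clm_apply hd (by fun_prop)]
    simp
  rw [key, key, hs.eq]

lemma ibp {Ω v w} (h : IsTest Ω v) (h' : IsTest Ω w) (i : Fin 2) :
    ∫ x, v x * pd w i x = - ∫ x, pd v i x * w x := by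
  exact integral_mul_fderiv_eq_neg_fderiv_mul_of_integrable ((h.pd i).mul h').int
    (h.mul (h'.pd i)).int (h.mul h').int (fun x _ => h.1.differentiable (by simp) x)
    (fun x _ => h'.1.differentiable (by simp) x)

lemma hess2_eq {w : EuclideanSpace ℝ (Fin 2) → ℝ} (h : ContDiff ℝ (⊤ : ℕ∞) w) (x) :
    hess2 w x = pd2 w 0 0 x * pd2 w 0 0 x + pd2 w 1 1 x * pd2 w 1 1 x
      + (pd2 w 0 1 x * pd2 w 0 1 x + pd2 w 0 1 x * pd2 w 0 1 x) := by
  unfold hess2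
  simp only [Fin.sum_univ_two]
  rw [pd2_symm h 1 0]
  ring

lemma IsTest.hess2 {Ω w} (h : IsTest Ω w) : IsTest Ω (hess2 w) := by
  rw [show _root_.hess2 w = _ from funext (hess2_eq h.1)]
  exact (((h.pd2 0 0).mul (h.pd2 0 0)).add ((h.pd2 1 1).mul (h.pd2 1 1))).add
    (((h.pd2 0 1).mul (h.pd2 0 1)).add ((h.pd2 0 1).mul (h.pd2 0 1)))

lemma IsTest.lap {Ω w} (h : IsTest Ω w) : IsTest Ω (lap w) :=
  (h.pd2 0 0).add (h.pd2 1 1)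

lemma lap_hess {Ω w} (h : IsTest Ω w) : ∫ x, lap w x * lap w x = ∫ x, hess2 w x := by
  have e1 : ∫ x, pd2 w 0 0 x * pd2 w 1 1 x = ∫ x, pd2 w 0 1 x * pd2 w 0 1 x := by
    have a1 := ibp (h.pd2 0 0) (h.pd 1) 1
    have a2 := ibp (h.pd2 0 1) (h.pd 1) 0
    have a3 : ∀ x, pd (pd2 w 0 0) 1 x = pd (pd2 w 0 1) 0 x := by
      intro x
      have : pd2 w 0 1 = pd2 w 1 0 := funext (pd2_symm h.1 0 1)
      rw [this]
      exact pd2_symm (h.pd 0).1 1 0 x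
    simp only [a3] at a1
    exact a1.trans a2.symm
  have e2 : ∀ x, lap w x * lap w x = hess2 w x
      + (2 * (pd2 w 0 0 x * pd2 w 1 1 x) - 2 * (pd2 w 0 1 x * pd2 w 0 1 x)) := by
    intro x
    rw [hess2_eq h.1]
    unfold _root_.lap
    ring
  simp only [e2]
  have i1 := ((h.pd2 0 0).mul (h.pd2 1 1)).int.const_mul 2
  have i2 := ((h.pd2 0 1).mul (h.pd2 0 1)).int.const_mul 2
  rw [integral_add (g := fun x => 2 * (pd2 w 0 0 x * pd2 w 1 1 x) - 2 * (pd2 w 0 1 x * pd2 w 0 1 x))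
    h.hess2.int (i1.sub i2), integral_sub i1 i2, integral_const_mul,
    integral_const_mul, e1]
  simp

lemma cs_int {Ω} {f g : EuclideanSpace ℝ (Fin 2) → ℝ} (hf : IsTest Ω f) (hg : IsTest Ω g) :
    |∫ x, f x * g x| ≤ Real.sqrt (∫ x, f x * f x) * Real.sqrt (∫ x, g x * g x) := by
  rw [← Real.sqrt_mul (integral_nonneg fun x => mul_self_nonneg _)]
  apply Real.abs_le_sqrt
  have hq : ∀ t : ℝ, 0 ≤ (∫ x, g x * g x) * (t * t) + (2 * ∫ x, f x * g x) * t + ∫ x, f x * f x := by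
    intro t
    have e : ∀ x, (f x + t * g x) * (f x + t * g x)
        = f x * f x + (2 * t * (f x * g x) + t * t * (g x * g x)) := fun x => by ring
    have h0 : 0 ≤ ∫ x, (f x + t * g x) * (f x + t * g x) :=
      integral_nonneg fun x => mul_self_nonneg _
    simp only [e] at h0
    have i1 := (hf.mul hg).int.const_mul (2 * t)
    have i2 := (hg.mul hg).int.const_mul (t * t)
    rw [integral_add (g := fun x => 2 * t * (f x * g x) + t * t * (g x * g x))
      (hf.mul hf).int (i1.add i2), integral_add i1 i2, integral_const_mul,
      integral_const_mul] at h0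
    linarith
  have := discrim_le_zero hq
  unfold discrim at this
  nlinarith

lemma transfer (f : EuclideanSpace ℝ (Fin 2) → ℝ) (hf : Continuous f) (hc : HasCompactSupport f)
    (L : ℝ) (hL : 0 < L) (h0 : ∀ x y, ¬ (|x| < L ∧ |y| < L) → f !₂[x, y] = 0) :
    ∫ z, f z = ∫ x in -L..L, ∫ y in -L..L, f !₂[x, y] := by
  have hLL : -L ≤ L := by linarith
  have m1 := EuclideanSpace.volume_preserving_symm_measurableEquiv_toLp (Fin 2)
  have m2 := (MeasureTheory.volume_preserving_finTwoArrow ℝ)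
  have m3 := (m1.symm.comp m2.symm)
  have e1 : ∫ z, f z = ∫ p : ℝ × ℝ, f !₂[p.1, p.2] := by
    have := m3.integral_comp (by
      exact (MeasurableEquiv.measurableEmbedding _).comp (MeasurableEquiv.measurableEmbedding _)) f
    rw [← this]
    rfl
  have hInt : Integrable (fun p : ℝ × ℝ => f !₂[p.1, p.2]) := by
    have h := (m3.integrable_comp_emb (by
      exact (MeasurableEquiv.measurableEmbedding _).comp (MeasurableEquiv.measurableEmbedding _))
      (g := f)).2 (hf.integrable_of_hasCompactSupport hc)
    exact h
  rw [e1]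
  have hz : ∀ p : ℝ × ℝ, p ∉ Set.Ioc (-L) L ×ˢ Set.Ioc (-L) L → f !₂[p.1, p.2] = 0 := by
    intro p hp
    apply h0
    rintro ⟨h1, h2⟩
    rw [abs_lt] at h1 h2
    exact hp ⟨⟨h1.1, h1.2.le⟩, ⟨h2.1, h2.2.le⟩⟩
  rw [← setIntegral_eq_integral_of_forall_compl_eq_zero hz, Measure.volume_eq_prod,
    setIntegral_prod _ hInt.integrableOn, intervalIntegral.integral_of_le hLL]
  simp only [intervalIntegral.integral_of_le hLL]

lemma pt_cont : Continuous (fun p : ℝ × ℝ => (!₂[p.1, p.2] : EuclideanSpace ℝ (Fin 2))) := by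
  apply (PiLp.continuous_toLp 2 _).comp
  apply continuous_pi
  intro i
  fin_cases i <;> simp <;> fun_prop

lemma dx_line {f : EuclideanSpace ℝ (Fin 2) → ℝ} (h : Differentiable ℝ f) (x y : ℝ) :
    HasDerivAt (fun t => f !₂[t, y]) (pd f 0 !₂[x, y]) x := by
  have hc : HasDerivAt (fun t : ℝ => (!₂[t, y] : EuclideanSpace ℝ (Fin 2)))
      (EuclideanSpace.single 0 1) x := by
    have : (fun t : ℝ => (!₂[t, y] : EuclideanSpace ℝ (Fin 2)))
        = fun t => !₂[0, y] + t • EuclideanSpace.single 0 1 := by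
      ext t i
      fin_cases i <;> simp
    rw [this]
    simpa using ((hasDerivAt_id x).smul_const (EuclideanSpace.single (0 : Fin 2) (1:ℝ))).const_add
      (!₂[0, y] : EuclideanSpace ℝ (Fin 2))
  exact (h _).hasFDerivAt.comp_hasDerivAt x hc

lemma dy_line {f : EuclideanSpace ℝ (Fin 2) → ℝ} (h : Differentiable ℝ f) (x y : ℝ) :
    HasDerivAt (fun t => f !₂[x, t]) (pd f 1 !₂[x, y]) y := by
  have hc : HasDerivAt (fun t : ℝ => (!₂[x, t] : EuclideanSpace ℝ (Fin 2)))
      (EuclideanSpace.single 1 1) y := by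
    have : (fun t : ℝ => (!₂[x, t] : EuclideanSpace ℝ (Fin 2)))
        = fun t => !₂[x, 0] + t • EuclideanSpace.single 1 1 := by
      ext t i
      fin_cases i <;> simp
    rw [this]
    simpa using ((hasDerivAt_id y).smul_const (EuclideanSpace.single (1 : Fin 2) (1:ℝ))).const_add
      (!₂[x, 0] : EuclideanSpace ℝ (Fin 2))
  exact (h _).hasFDerivAt.comp_hasDerivAt y hc

def sg (w : EuclideanSpace ℝ (Fin 2) → ℝ) (z : EuclideanSpace ℝ (Fin 2)) : ℝ :=
  pd w 0 z * pd w 0 z + pd w 1 z * pd w 1 z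

lemma IsTest.sg {Ω w} (h : IsTest Ω w) : IsTest Ω (sg w) :=
  ((h.pd 0).mul (h.pd 0)).add ((h.pd 1).mul (h.pd 1))

lemma pd_sg {Ω w} (h : IsTest Ω w) (i : Fin 2) (z) :
    pd (sg w) i z = 2 * (pd w 0 z * pd2 w i 0 z + pd w 1 z * pd2 w i 1 z) := by
  have d0 := ((h.pd 0).1.differentiable (by simp) z).hasFDerivAt
  have d1 := ((h.pd 1).1.differentiable (by simp) z).hasFDerivAt
  have := ((d0.mul d0).add (d1.mul d1)).fderiv
  have e : pd (sg w) i z = (fderiv ℝ (fun z => pd w 0 z * pd w 0 z + pd w 1 z * pd w 1 z) z)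
    (EuclideanSpace.single i 1) := rfl
  rw [e]
  erw [this]
  simp [pd2_eq, pd]
  ring

lemma hess2_nonneg (w : EuclideanSpace ℝ (Fin 2) → ℝ) (z) : 0 ≤ hess2 w z :=
  Finset.sum_nonneg fun _ _ => Finset.sum_nonneg fun _ _ => sq_nonneg _

lemma sobolev {Ω w} (hΩ : IsOpen Ω) (hb : Bornology.IsBounded Ω) (h : IsTest Ω w) :
    Real.pi ^ 4 * ∫ z, sg w z * sg w z ≤ (volume Ω).toReal * (∫ z, hess2 w z) ^ 2 := by
  obtain ⟨χ, hχ1, hχ0, hχc, hχI⟩ := exists_continuous_one_zero_of_isCompact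
    (show IsCompact (tsupport w) from h.2.1) hΩ.isClosed_compl
    (Set.disjoint_compl_right_iff_subset.2 h.2.2)
  obtain ⟨C, hC⟩ := hb.exists_norm_le
  set L : ℝ := |C| + 1 with hLdef
  have hL : 0 < L := by positivity
  have hout : ∀ x y : ℝ, ¬ (|x| < L ∧ |y| < L) → (!₂[x, y] : EuclideanSpace ℝ (Fin 2)) ∉ Ω := by
    intro x y hxy hm
    apply hxy
    have hn := (hC _ hm).trans (le_abs_self C)
    have h0 := (PiLp.norm_apply_le (!₂[x, y] : EuclideanSpace ℝ (Fin 2)) 0).trans hn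
    have h1 := (PiLp.norm_apply_le (!₂[x, y] : EuclideanSpace ℝ (Fin 2)) 1).trans hn
    simp at h0 h1
    constructor <;> linarith
  have t1 := transfer (fun z => sg w z * sg w z) (h.sg.mul h.sg).cont (h.sg.mul h.sg).2.1 L hL
    (fun x y hxy => (h.sg.mul h.sg).off (hout x y hxy))
  have t2 := transfer (hess2 w) h.hess2.cont h.hess2.2.1 L hL
    (fun x y hxy => h.hess2.off (hout x y hxy))
  have t3 := transfer χ χ.continuous hχc L hL (fun x y hxy => hχ0 (hout x y hxy))
  have hv : ∫ z, χ z ≤ (volume Ω).toReal := by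
    rw [← setIntegral_eq_integral_of_forall_compl_eq_zero (s := Ω) (fun z hz => hχ0 hz)]
    calc ∫ z in Ω, χ z ≤ ∫ z in Ω, (1:ℝ) := by
          apply setIntegral_mono_on _ _ hΩ.measurableSet (fun z _ => (hχI z).2)
          · exact (χ.continuous.integrable_of_hasCompactSupport hχc).integrableOn
          · exact integrableOn_const hb.measure_lt_top.ne
      _ = (volume Ω).toReal := by simp [Measure.real]
  have hcont : ∀ f : EuclideanSpace ℝ (Fin 2) → ℝ, Continuous f →
      Continuous (Function.uncurry fun x y => f !₂[x, y]) := fun f hf => hf.comp pt_cont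
  have hdiff : Differentiable ℝ (sg w) := h.sg.1.differentiable (by simp)
  have hcore : ∀ R : ℝ, 0 < R → 4 * boxD R ^ 2 * ∫ z, sg w z * sg w z
      ≤ (∫ z, χ z) * (∫ z, hess2 w z) ^ 2 := by
    intro R hR
    rw [t1, t2, t3]
    simp only [← pow_two (sg w _)]
    refine core (fun x y => sg w !₂[x, y]) (fun x y => pd (sg w) 0 !₂[x, y])
      (fun x y => pd (sg w) 1 !₂[x, y]) (fun x y => hess2 w !₂[x, y]) (fun x y => χ !₂[x, y])
      (hcont _ h.sg.cont) (hcont _ (h.sg.pd 0).cont) (hcont _ (h.sg.pd 1).cont)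
      (hcont _ h.hess2.cont) (hcont _ χ.continuous)
      (fun x y => ?_) (fun x y => hess2_nonneg _ _) (fun x y => (hχI _).1)
      (fun x y => dx_line hdiff x y) (fun x y => dy_line hdiff x y) R L hR hL
      (fun y => h.sg.off (hout _ _ ?_)) (fun y => h.sg.off (hout _ _ ?_))
      (fun x => h.sg.off (hout _ _ ?_)) (fun x => h.sg.off (hout _ _ ?_)) (fun x y => ?_)
      (fun x y hne => ?_)
    · exact add_nonneg (mul_self_nonneg _) (mul_self_nonneg _)
    · simp [le_abs_self]
    · simp [le_abs_self]
    · simp [le_abs_self]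
    · simp [le_abs_self]
    · rw [pd_sg h, pd_sg h, hess2_eq h.1, pd2_symm h.1 1 0]
      unfold sg
      generalize (!₂[x, y] : EuclideanSpace ℝ (Fin 2)) = z
      generalize pd w 0 z = a
      generalize pd w 1 z = b
      generalize pd2 w 0 0 z = p
      generalize pd2 w 0 1 z = q
      generalize pd2 w 1 1 z = r
      nlinarith [sq_nonneg (a * q - b * p), sq_nonneg (a * r - b * q)]
    · have : (!₂[x, y] : EuclideanSpace ℝ (Fin 2)) ∈ tsupport w := by
        by_contra hn
        apply hne
        simp [sg, pd_off _ hn]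
      exact (hχ1 this).ge
  have hlim : Filter.Tendsto (fun R => 4 * boxD R ^ 2 * ∫ z, sg w z * sg w z) Filter.atTop
      (nhds (4 * (Real.pi ^ 2 / 2) ^ 2 * ∫ z, sg w z * sg w z)) :=
    ((boxD_lim.pow 2).const_mul 4).mul_const _
  have hfin := le_of_tendsto hlim
    (Filter.eventually_atTop.2 ⟨1, fun R hR => hcore R (lt_of_lt_of_le one_pos hR)⟩)
  calc Real.pi ^ 4 * ∫ z, sg w z * sg w z
      = 4 * (Real.pi ^ 2 / 2) ^ 2 * ∫ z, sg w z * sg w z := by ring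
    _ ≤ _ := hfin
    _ ≤ _ := mul_le_mul_of_nonneg_right hv (sq_nonneg _)

lemma gam_bound {Ω v w φ} (hΩ : IsOpen Ω) (hb : Bornology.IsBounded Ω) (hv : IsTest Ω v)
    (hw : IsTest Ω w) (hφ : IsTest Ω φ) :
    |Gam Ω v w φ| ≤ Real.sqrt (volume Ω).toReal / Real.pi ^ 2 *
        (Real.sqrt (∫ x in Ω, hess2 v x) *
          Real.sqrt (∫ x in Ω, hess2 w x) * Real.sqrt (∫ x in Ω, hess2 φ x)) := by
  rw [hv.hess2.setint, hw.hess2.setint, hφ.hess2.setint]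
  have hJ : IsTest Ω (fun x => pd w 1 x * pd φ 0 x - pd w 0 x * pd φ 1 x) :=
    ((hw.pd 1).mul (hφ.pd 0)).sub ((hw.pd 0).mul (hφ.pd 1))
  have e0 : Gam Ω v w φ = ∫ x, lap v x * (pd w 1 x * pd φ 0 x - pd w 0 x * pd φ 1 x) :=
    (hv.lap.mul hJ).setint
  have c1 := cs_int hv.lap hJ
  rw [lap_hess hv] at c1
  have c2 : ∫ x, (pd w 1 x * pd φ 0 x - pd w 0 x * pd φ 1 x)
      * (pd w 1 x * pd φ 0 x - pd w 0 x * pd φ 1 x) ≤ ∫ x, sg w x * sg φ x := by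
    apply integral_mono (hJ.mul hJ).int (hw.sg.mul hφ.sg).int
    intro x
    simp only [sg]
    nlinarith [sq_nonneg (pd w 1 x * pd φ 1 x + pd w 0 x * pd φ 0 x)]
  have c3 := (le_abs_self _).trans (cs_int hw.sg hφ.sg)
  have key : ∀ {u}, IsTest Ω u → Real.sqrt (∫ x, sg u x * sg u x)
      ≤ Real.sqrt (volume Ω).toReal / Real.pi ^ 2 * ∫ x, hess2 u x := by
    intro u hu
    have hs := sobolev hΩ hb hu
    have hp : 0 < Real.pi ^ 2 := by positivity
    have hh : 0 ≤ ∫ x, hess2 u x := integral_nonneg fun x => hess2_nonneg u x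
    apply Real.sqrt_le_iff.2 ⟨by positivity, ?_⟩
    rw [mul_pow, div_pow, Real.sq_sqrt ENNReal.toReal_nonneg, div_mul_eq_mul_div,
      le_div_iff₀ (by positivity)]
    linarith [hs]
  set K := Real.sqrt (volume Ω).toReal / Real.pi ^ 2 with hK
  have hK0 : 0 ≤ K := by positivity
  set Hw := ∫ x, hess2 w x
  set Hp := ∫ x, hess2 φ x
  have hw0 : 0 ≤ Hw := integral_nonneg fun x => hess2_nonneg w x
  have hp0 : 0 ≤ Hp := integral_nonneg fun x => hess2_nonneg φ x
  have c4 : ∫ x, sg w x * sg φ x ≤ (K * Hw) * (K * Hp) :=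
    c3.trans (mul_le_mul (key hw) (key hφ) (Real.sqrt_nonneg _) (by positivity))
  have c5 := Real.sqrt_le_sqrt (c2.trans c4)
  rw [show (K * Hw) * (K * Hp) = K ^ 2 * (Hw * Hp) by ring, Real.sqrt_mul (sq_nonneg K),
    Real.sqrt_sq hK0, Real.sqrt_mul hw0] at c5
  rw [e0]
  calc _ ≤ _ := c1
    _ ≤ Real.sqrt (∫ x, hess2 v x) * (K * (Real.sqrt Hw * Real.sqrt Hp)) :=
      mul_le_mul_of_nonneg_left c5 (Real.sqrt_nonneg _)
    _ = _ := by ring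

lemma pd_sub {Ω v w} (hv : IsTest Ω v) (hw : IsTest Ω w) (i : Fin 2) (x) :
    pd (fun y => v y - w y) i x = pd v i x - pd w i x := by
  unfold pd
  rw [fderiv_fun_sub (hv.1.differentiable (by simp) x) (hw.1.differentiable (by simp) x)]
  rfl

lemma lap_sub {Ω v w} (hv : IsTest Ω v) (hw : IsTest Ω w) (x) :
    lap (fun y => v y - w y) x = lap v x - lap w x := by
  have h2 : ∀ i, pd2 (fun y => v y - w y) i i x = pd2 v i i x - pd2 w i i x := by
    intro i
    rw [pd2_eq, funext (pd_sub hv hw i), pd_sub (hv.pd i) (hw.pd i)]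
    rfl
  unfold lap
  rw [h2, h2]
  ring

lemma gam_int {Ω v w φ} (hv : IsTest Ω v) (hw : IsTest Ω w) (hφ : IsTest Ω φ) :
    IntegrableOn (fun x => lap v x * (pd w 1 x * pd φ 0 x - pd w 0 x * pd φ 1 x)) Ω :=
  (hv.lap.mul (((hw.pd 1).mul (hφ.pd 0)).sub ((hw.pd 0).mul (hφ.pd 1)))).int.integrableOn

/-- Lipschitz continuity of the Fréchet derivative `DG(v) = Γ(v,·,·) + Γ(·,v,·)` of the
quadratic semilinearity `G(v) = Γ(v,v)`, with constant `2|Ω|^{1/2}/π²` in the `H²` seminorm. -/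
theorem DG_lipschitz (Ω : Set (EuclideanSpace ℝ (Fin 2))) (hΩ : IsOpen Ω)
    (hbdd : Bornology.IsBounded Ω)
    (v w φ ψ : EuclideanSpace ℝ (Fin 2) → ℝ)
    (hv : IsTest Ω v) (hw : IsTest Ω w) (hφ : IsTest Ω φ) (hψ : IsTest Ω ψ) :
    |(Gam Ω v φ ψ + Gam Ω φ v ψ) - (Gam Ω w φ ψ + Gam Ω φ w ψ)| ≤
      2 * Real.sqrt (volume Ω).toReal / Real.pi ^ 2 *
        (Real.sqrt (∫ x in Ω, hess2 (fun y => v y - w y) x) *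
          Real.sqrt (∫ x in Ω, hess2 φ x) * Real.sqrt (∫ x in Ω, hess2 ψ x)) := by
  have l1 : Gam Ω (fun y => v y - w y) φ ψ = Gam Ω v φ ψ - Gam Ω w φ ψ := by
    unfold Gam
    rw [← integral_sub (gam_int hv hφ hψ) (gam_int hw hφ hψ)]
    congr 1
    ext x
    rw [lap_sub hv hw]
    ring
  have l2 : Gam Ω φ (fun y => v y - w y) ψ = Gam Ω φ v ψ - Gam Ω φ w ψ := by
    unfold Gam
    rw [← integral_sub (gam_int hφ hv hψ) (gam_int hφ hw hψ)]
    congr 1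
    ext x
    rw [pd_sub hv hw, pd_sub hv hw]
    ring
  have b1 := gam_bound hΩ hbdd (hv.sub hw) hφ hψ
  have b2 := gam_bound hΩ hbdd hφ (hv.sub hw) hψ
  rw [show (Gam Ω v φ ψ + Gam Ω φ v ψ) - (Gam Ω w φ ψ + Gam Ω φ w ψ)
    = Gam Ω (fun y => v y - w y) φ ψ + Gam Ω φ (fun y => v y - w y) ψ by rw [l1, l2]; ring]
  refine (abs_add_le _ _).trans ((add_le_add b1 b2).trans (le_of_eq ?_))
  ring

end
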